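/- The functions |λ|_p^{d/2}(π_{(ξ,η,λ)})_{hh'} with ‖(ξ,η,λ)‖_p ≤ p^n, (ξ,η) ∈ Q_p^{2d}/p^{v(λ)}Z_p^{2d}, h,h' ∈ Z_p^d/p^{-v(λ)}Z_p^d, form an orthonormal family in L²(H_d) of cardinality p^{n(2d+1)}, and hence an orthonormal basis of the space D_n(H_d) of right-H_d(p^nZ_p)-invariant functions. -/

import Mathlib

noncomputable section

variable (p : ℕ) [Fact p.Prime] (d : ℕ)

def dotZ (x y : Fin d → ℤ_[p]) : ℤ_[p] := ∑ i, x i * y i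

/-- The Heisenberg group `H_d(ℤ_p)`: the set `ℤ_p^{2d+1}` written as triples `(x, y, z)`. -/
@[ext] structure Heis where
  x : Fin d → ℤ_[p]
  y : Fin d → ℤ_[p]
  z : ℤ_[p]

variable {p d}

instance : Mul (Heis p d) :=
  ⟨fun g g' => ⟨g.x + g'.x, g.y + g'.y, g.z + g'.z + dotZ p d g.x g'.y⟩⟩
instance : One (Heis p d) := ⟨⟨0, 0, 0⟩⟩
instance : Inv (Heis p d) :=
  ⟨fun g => ⟨-g.x, -g.y, -g.z + dotZ p d g.x g.y⟩⟩

lemma heis_mul_def (g g' : Heis p d) :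
    g * g' = ⟨g.x + g'.x, g.y + g'.y, g.z + g'.z + dotZ p d g.x g'.y⟩ := rfl
lemma heis_one_def : (1 : Heis p d) = ⟨0, 0, 0⟩ := rfl
lemma heis_inv_def (g : Heis p d) :
    g⁻¹ = ⟨-g.x, -g.y, -g.z + dotZ p d g.x g.y⟩ := rfl

instance heisGroup : Group (Heis p d) :=
  Group.ofLeftAxioms
    (by
      rintro ⟨a1, a2, a3⟩ ⟨b1, b2, b3⟩ ⟨c1, c2, c3⟩
      simp only [heis_mul_def, dotZ, Pi.add_apply, add_mul, mul_add,
        Finset.sum_add_distrib, Heis.mk.injEq]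
      refine ⟨add_assoc _ _ _, add_assoc _ _ _, by ring⟩)
    (by
      rintro ⟨a1, a2, a3⟩
      simp [heis_mul_def, heis_one_def, dotZ])
    (by
      rintro ⟨a1, a2, a3⟩
      simp only [heis_mul_def, heis_inv_def, heis_one_def, dotZ,
        Pi.neg_apply, Heis.mk.injEq, neg_add_cancel]
      refine ⟨trivial, trivial, by ring_nf; simp⟩)

open MeasureTheory Classical

variable (p d)

/-- Truncation of a `p`-adic number to a `p`-adic integer (`0` if it is not an integer). -/
def padicToInt (x : ℚ_[p]) : ℤ_[p] := if h : ‖x‖ ≤ 1 then ⟨x, h⟩ else 0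

/-- The `p`-adic fractional part `{x}_p`, as a rational number. -/
def padicFract (x : ℚ_[p]) : ℚ :=
  ((padicToInt p (x * (p : ℚ_[p]) ^ (-x.valuation).toNat)).appr (-x.valuation).toNat : ℚ) /
    (p : ℚ) ^ (-x.valuation).toNat

/-- The additive character `x ↦ e^{2πi {x}_p}` of `ℚ_p`. -/
def eChar (x : ℚ_[p]) : ℂ := Complex.exp (2 * Real.pi * Complex.I * (padicFract p x : ℂ))

instance : MeasurableSpace ℤ_[p] := borel _
instance : BorelSpace ℤ_[p] := ⟨rfl⟩
instance : TopologicalSpace (Heis p d) :=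
  TopologicalSpace.induced (fun g => (g.x, g.y, g.z)) inferInstance
instance : MeasurableSpace (Heis p d) := borel _
instance : BorelSpace (Heis p d) := ⟨rfl⟩

/-- Pairing of a `ℚ_p`-covector with a `ℤ_p`-vector. -/
def dotQZ (ξ : Fin d → ℚ_[p]) (x : Fin d → ℤ_[p]) : ℚ_[p] := ∑ i, ξ i * (x i : ℚ_[p])

/-- The Schrödinger-type realization
`π_{(ξ,η,λ)}(x,y,z)φ(u) = e^{2πi{ξ·x + η·y + λ(z + u·y)}_p} φ(u + x)`. -/
def piAct (ξ η : Fin d → ℚ_[p]) (lam : ℚ_[p]) (g : Heis p d)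
    (φ : (Fin d → ℤ_[p]) → ℂ) : (Fin d → ℤ_[p]) → ℂ := fun u =>
  eChar p (dotQZ p d ξ g.x + dotQZ p d η g.y +
      lam * ((g.z : ℚ_[p]) + (dotZ p d u g.y : ℚ_[p]))) * φ (u + g.x)

/-- `φ` is invariant under translations by `p^n ℤ_p^d`. -/
def InvariantUnder (n : ℕ) (φ : (Fin d → ℤ_[p]) → ℂ) : Prop :=
  ∀ u v : Fin d → ℤ_[p], (∀ i, ‖v i‖ ≤ (p : ℝ) ^ (-(n : ℤ))) → φ (u + v) = φ u

/-- The indicator function of the coset `h + p^n ℤ_p^d`. -/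
def indC (n : ℕ) (h : Fin d → ℤ_[p]) : (Fin d → ℤ_[p]) → ℂ :=
  Set.indicator {u | ∀ i, ‖u i - h i‖ ≤ (p : ℝ) ^ (-(n : ℤ))} fun _ => (1 : ℂ)

/-- `n_λ = -v(λ)`, so that `|λ|_p = p^{n_λ}`. -/
def nLam (lam : ℚ_[p]) : ℕ := (-lam.valuation).toNat

/-- The matrix coefficient
`(π_{(ξ,η,λ)})_{hh'}(x,y,z) = e^{2πi{ξ·x+η·y+λ(z+h'·y)}_p} 1_{h-h'+p^{-v(λ)}ℤ_p^d}(x)`. -/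
def matCoeff (ξ η : Fin d → ℚ_[p]) (lam : ℚ_[p]) (h h' : Fin d → ℤ_[p])
    (g : Heis p d) : ℂ :=
  eChar p (dotQZ p d ξ g.x + dotQZ p d η g.y +
      lam * ((g.z : ℚ_[p]) + (dotZ p d h' g.y : ℚ_[p]))) *
    indC p d (nLam p lam) (h - h') g.x

/-- The normalized matrix coefficient `|λ|_p^{d/2} (π_{(ξ,η,λ)})_{hh'}`. -/
def matCoeffN (ξ η : Fin d → ℚ_[p]) (lam : ℚ_[p]) (h h' : Fin d → ℕ)
    (g : Heis p d) : ℂ :=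
  (Real.sqrt ((p : ℝ) ^ (nLam p lam * d)) : ℂ) *
    matCoeff p d ξ η lam (fun i => ((h i : ℕ) : ℤ_[p])) (fun i => ((h' i : ℕ) : ℤ_[p])) g

/-- The index set of the family: `(ξ,η,λ)` runs over the canonical representatives of the
unitary dual with `‖(ξ,η,λ)‖_p ≤ p^n` and `(ξ,η) ∈ ℚ_p^{2d}/p^{v(λ)}ℤ_p^{2d}`, and `h, h'`
over representatives of `ℤ_p^d/p^{-v(λ)}ℤ_p^d`. -/
def GoodIdx (n : ℕ)
    (t : (Fin d → ℚ_[p]) × (Fin d → ℚ_[p]) × ℚ_[p] × (Fin d → ℕ) × (Fin d → ℕ)) : Prop :=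
  (t.2.2.1 = 1 ∨ (1 < ‖t.2.2.1‖ ∧ (padicFract p t.2.2.1 : ℚ_[p]) = t.2.2.1)) ∧
    ‖t.2.2.1‖ ≤ (p : ℝ) ^ (n : ℤ) ∧
    (∀ i, ‖t.1 i‖ ≤ (p : ℝ) ^ (n : ℤ) ∧
      (padicFract p (t.1 i * (p : ℚ_[p]) ^ nLam p t.2.2.1) : ℚ_[p]) =
        t.1 i * (p : ℚ_[p]) ^ nLam p t.2.2.1) ∧
    (∀ i, ‖t.2.1 i‖ ≤ (p : ℝ) ^ (n : ℤ) ∧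
      (padicFract p (t.2.1 i * (p : ℚ_[p]) ^ nLam p t.2.2.1) : ℚ_[p]) =
        t.2.1 i * (p : ℚ_[p]) ^ nLam p t.2.2.1) ∧
    (∀ i, t.2.2.2.1 i < p ^ nLam p t.2.2.1) ∧ (∀ i, t.2.2.2.2 i < p ^ nLam p t.2.2.1)

/-- The space `D_n(H_d)` of right-`H_d(p^n ℤ_p)`-invariant functions. -/
def Dn (n : ℕ) : Submodule ℂ (Heis p d → ℂ) where
  carrier := {f | ∀ g h : Heis p d,
    ((∀ i, ‖h.x i‖ ≤ (p : ℝ) ^ (-(n : ℤ))) ∧ (∀ i, ‖h.y i‖ ≤ (p : ℝ) ^ (-(n : ℤ))) ∧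
      ‖h.z‖ ≤ (p : ℝ) ^ (-(n : ℤ))) → f (g * h) = f g}
  add_mem' := fun hf hg g h hh => by simp only [Pi.add_apply, hf g h hh, hg g h hh]
  zero_mem' := fun g h hh => rfl
  smul_mem' := fun c f hf g h hh => by simp only [Pi.smul_apply, hf g h hh]

/-!
Left translation by an element `u` with `u.x ∈ p^{n_λ} ℤ_p^d` multiplies the matrix coefficient
attached to `(ξ, η, λ, h, h')` by the character value `e^{2πi{ξ·u.x + η·u.y + λ(u.z + h'·u.y)}_p}`.
Invariance of the measure therefore makes two coefficients orthogonal as soon as some such `u`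
separates their characters: central `u` separate the `λ`, the `u.y` directions separate the classes
`η + λh'` modulo `ℤ_p^d`, hence `η` and `h'`, and the `u.x` directions separate the `ξ`. When only
`h` differs, the supports are disjoint. The normalization is that of a coset of `p^{n_λ} ℤ_p^d`,
which has measure `p^{-n_λ d}`.

For each of the `p^n` values of `λ` there are `p^{2d(n - n_λ)}` pairs `(ξ, η)` and `p^{2d n_λ}`
pairs `(h, h')`, which makes `p^{n(2d+1)}` coefficients in all. They lie in `D_n`, whose elements
factor through reduction modulo `p^n`, so that its dimension is at most `p^{n(2d+1)}`.
-/

section Ultrametric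

variable {E : Type*} [SeminormedAddGroup E] [IsUltrametricDist E] {x y : E} {c : ℝ}

lemma norm_add_le_of_norm_le (hx : ‖x‖ ≤ c) (hy : ‖y‖ ≤ c) : ‖x + y‖ ≤ c :=
  (IsUltrametricDist.norm_add_le_max x y).trans (max_le hx hy)

lemma norm_sub_le_of_norm_le (hx : ‖x‖ ≤ c) (hy : ‖y‖ ≤ c) : ‖x - y‖ ≤ c := by
  rw [sub_eq_add_neg]
  exact norm_add_le_of_norm_le hx (by rwa [norm_neg])

end Ultrametric

lemma den_natCast_div_natCast_dvd (a b : ℕ) : ((a : ℚ) / b).den ∣ b := by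
  have h := Rat.den_dvd a b
  rw [Rat.divInt_eq_div] at h
  exact Int.natCast_dvd_natCast.1 (by simpa using h)

section PadicFract

variable {p}

lemma exists_eq_intCast_of_den_dvd_pow {q : ℚ} {m : ℕ} (hden : q.den ∣ p ^ m)
    (hq : ‖(q : ℚ_[p])‖ ≤ 1) : ∃ k : ℤ, q = k := by
  obtain ⟨j, -, hj⟩ := (Nat.dvd_prime_pow Fact.out).1 hden
  have hnum : ‖(q.num : ℚ_[p])‖ ≤ (p : ℝ) ^ (-(j : ℤ)) := by
    have hmul : (q.num : ℚ_[p]) = q * (p : ℚ_[p]) ^ j := by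
      exact_mod_cast congrArg (Rat.cast : ℚ → ℚ_[p]) (hj ▸ Rat.mul_den_eq_num q).symm
    rw [hmul, norm_mul, Padic.norm_p_pow]
    exact mul_le_of_le_one_left (by positivity) hq
  have hdvd : q.den ∣ q.num.natAbs :=
    Int.natCast_dvd.1 (by rw [hj]; exact (Padic.norm_int_le_pow_iff_dvd _ _).1 hnum)
  have hden_one : q.den = 1 := Nat.eq_one_of_dvd_coprimes q.reduced hdvd dvd_rfl
  exact ⟨q.num, ((Rat.den_eq_one_iff q).1 hden_one).symm⟩

lemma natCast_div_pow_lt_one {a m : ℕ} (ha : a < p ^ m) : (a : ℚ) / (p : ℚ) ^ m < 1 := by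
  have hp : 0 < p := (Fact.out : p.Prime).pos
  rw [div_lt_one (by positivity)]
  exact_mod_cast ha

lemma padicFract_nonneg (x : ℚ_[p]) : 0 ≤ padicFract p x := by
  unfold padicFract
  positivity

lemma padicFract_lt_one (x : ℚ_[p]) : padicFract p x < 1 :=
  natCast_div_pow_lt_one (PadicInt.appr_lt _ _)

lemma exists_den_padicFract_dvd_pow (x : ℚ_[p]) : ∃ m, (padicFract p x).den ∣ p ^ m := by
  refine ⟨(-x.valuation).toNat, ?_⟩
  rw [padicFract, ← Nat.cast_pow (α := ℚ)]
  exact den_natCast_div_natCast_dvd _ _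

lemma norm_mul_pow_le_iff {x : ℚ_[p]} {m : ℕ} (k : ℤ) :
    ‖x * (p : ℚ_[p]) ^ m‖ ≤ (p : ℝ) ^ (k - m) ↔ ‖x‖ ≤ (p : ℝ) ^ k := by
  have hp : (0 : ℝ) < p := mod_cast (Fact.out : p.Prime).pos
  rw [norm_mul, Padic.norm_p_pow, sub_eq_add_neg, zpow_add₀ hp.ne']
  exact mul_le_mul_iff_left₀ (zpow_pos hp _)

lemma norm_mul_pow_le_one_iff {x : ℚ_[p]} {m : ℕ} :
    ‖x * (p : ℚ_[p]) ^ m‖ ≤ 1 ↔ ‖x‖ ≤ (p : ℝ) ^ (m : ℤ) := by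
  simpa using norm_mul_pow_le_iff (x := x) (m := m) m

lemma norm_sub_appr_le (z : ℤ_[p]) (n : ℕ) :
    ‖z - (z.appr n : ℤ_[p])‖ ≤ (p : ℝ) ^ (-(n : ℤ)) :=
  (PadicInt.norm_le_pow_iff_mem_span_pow _ _).2 (PadicInt.appr_spec n z)

lemma norm_sub_appr_div_pow_le_one {x : ℚ_[p]} {m : ℕ} (hx : ‖x‖ ≤ (p : ℝ) ^ (m : ℤ)) :
    ‖x - ((padicToInt p (x * (p : ℚ_[p]) ^ m)).appr m : ℚ_[p]) / (p : ℚ_[p]) ^ m‖ ≤ 1 := by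
  have hp : (p : ℚ_[p]) ^ m ≠ 0 := pow_ne_zero _ (mod_cast (Fact.out : p.Prime).ne_zero)
  have hint : ‖x * (p : ℚ_[p]) ^ m‖ ≤ 1 := norm_mul_pow_le_one_iff.2 hx
  have hcoe : (padicToInt p (x * (p : ℚ_[p]) ^ m) : ℚ_[p]) = x * (p : ℚ_[p]) ^ m :=
    congrArg Subtype.val (dif_pos hint)
  have happr := norm_sub_appr_le (padicToInt p (x * (p : ℚ_[p]) ^ m)) m
  rw [PadicInt.norm_def, PadicInt.coe_sub, hcoe, PadicInt.coe_natCast] at happr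
  rw [← zpow_zero (p : ℝ), ← norm_mul_pow_le_iff (m := m), sub_mul, div_mul_cancel₀ _ hp, zero_sub]
  exact happr

lemma norm_le_pow_toNat_neg_valuation (x : ℚ_[p]) :
    ‖x‖ ≤ (p : ℝ) ^ ((-x.valuation).toNat : ℤ) := by
  by_cases hx : x = 0
  · simp [hx]
  · rw [Padic.norm_eq_zpow_neg_valuation hx]
    exact zpow_le_zpow_right₀ (mod_cast (Fact.out : p.Prime).one_le) (Int.self_le_toNat _)

lemma norm_sub_padicFract_le_one (x : ℚ_[p]) : ‖x - (padicFract p x : ℚ_[p])‖ ≤ 1 := by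
  simpa [padicFract] using norm_sub_appr_div_pow_le_one (norm_le_pow_toNat_neg_valuation x)

lemma padicFract_eq_of_norm_sub_le_one {x : ℚ_[p]} {q : ℚ} {m : ℕ} (hden : q.den ∣ p ^ m)
    (hq₀ : 0 ≤ q) (hq₁ : q < 1) (hxq : ‖x - (q : ℚ_[p])‖ ≤ 1) : padicFract p x = q := by
  obtain ⟨l, hl⟩ := exists_den_padicFract_dvd_pow x
  have hnorm : ‖((q - padicFract p x : ℚ) : ℚ_[p])‖ ≤ 1 := by
    rw [Rat.cast_sub, ← sub_sub_sub_cancel_left _ (q : ℚ_[p]) x]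
    exact norm_sub_le_of_norm_le (norm_sub_padicFract_le_one x) hxq
  obtain ⟨k, hk⟩ := exists_eq_intCast_of_den_dvd_pow (m := m + l)
    ((Rat.sub_den_dvd _ _).trans (pow_add p m l ▸ mul_dvd_mul hden hl)) hnorm
  have hlt : |q - padicFract p x| < 1 :=
    abs_sub_lt_of_nonneg_of_lt hq₀ hq₁ (padicFract_nonneg x) (padicFract_lt_one x)
  rw [hk] at hlt
  have hk₀ : k = 0 := Int.abs_lt_one_iff.1 (mod_cast hlt)
  rw [hk₀, Int.cast_zero, sub_eq_zero] at hk
  exact hk.symm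

lemma padicFract_natCast_div_pow {a m : ℕ} (ha : a < p ^ m) :
    padicFract p ((a : ℚ_[p]) / (p : ℚ_[p]) ^ m) = (a : ℚ) / (p : ℚ) ^ m :=
  padicFract_eq_of_norm_sub_le_one (by simpa using den_natCast_div_natCast_dvd a (p ^ m))
    (by positivity) (natCast_div_pow_lt_one ha) (by simp)

lemma padicFract_congr {x y : ℚ_[p]} (h : ‖x - y‖ ≤ 1) :
    padicFract p x = padicFract p y := by
  obtain ⟨m, hm⟩ := exists_den_padicFract_dvd_pow y
  refine padicFract_eq_of_norm_sub_le_one hm (padicFract_nonneg y) (padicFract_lt_one y) ?_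
  rw [← sub_add_sub_cancel x y]
  exact norm_add_le_of_norm_le h (norm_sub_padicFract_le_one y)

lemma eq_of_padicFract_eq_self {x y : ℚ_[p]} (hx : (padicFract p x : ℚ_[p]) = x)
    (hy : (padicFract p y : ℚ_[p]) = y) (h : ‖x - y‖ ≤ 1) : x = y := by
  rw [← hx, ← hy, padicFract_congr h]

lemma padicFract_eq_self_and_norm_le_iff {x : ℚ_[p]} {m : ℕ} :
    (padicFract p x : ℚ_[p]) = x ∧ ‖x‖ ≤ (p : ℝ) ^ (m : ℤ) ↔
      ∃ a < p ^ m, (a : ℚ_[p]) / (p : ℚ_[p]) ^ m = x := by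
  have hp : (p : ℚ_[p]) ^ m ≠ 0 := pow_ne_zero _ (mod_cast (Fact.out : p.Prime).ne_zero)
  have hfract {a : ℕ} (ha : a < p ^ m) :
      (padicFract p ((a : ℚ_[p]) / (p : ℚ_[p]) ^ m) : ℚ_[p]) = a / (p : ℚ_[p]) ^ m := by
    rw [padicFract_natCast_div_pow ha]
    push_cast
    rfl
  constructor
  · rintro ⟨hx, hxm⟩
    refine ⟨_, PadicInt.appr_lt _ m, (eq_of_padicFract_eq_self hx (hfract (PadicInt.appr_lt _ m))
      (norm_sub_appr_div_pow_le_one hxm)).symm⟩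
  · rintro ⟨a, ha, rfl⟩
    refine ⟨hfract ha, norm_mul_pow_le_one_iff.1 ?_⟩
    rw [div_mul_cancel₀ _ hp]
    exact IsUltrametricDist.norm_natCast_le_one _ a

end PadicFract

section Character

variable {p}

lemma eChar_add (x y : ℚ_[p]) : eChar p (x + y) = eChar p x * eChar p y := by
  obtain ⟨m, hm⟩ := exists_den_padicFract_dvd_pow x
  obtain ⟨l, hl⟩ := exists_den_padicFract_dvd_pow y
  obtain ⟨r, hr⟩ := exists_den_padicFract_dvd_pow (x + y)
  have hden : (padicFract p x + padicFract p y - padicFract p (x + y)).den ∣ p ^ (m + l + r) := by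
    rw [pow_add, pow_add]
    exact (Rat.sub_den_dvd _ _).trans
      (mul_dvd_mul ((Rat.add_den_dvd _ _).trans (mul_dvd_mul hm hl)) hr)
  have hnorm : ‖((padicFract p x + padicFract p y - padicFract p (x + y) : ℚ) : ℚ_[p])‖ ≤ 1 := by
    have hsplit : ((padicFract p x + padicFract p y - padicFract p (x + y) : ℚ) : ℚ_[p]) =
        (x + y - padicFract p (x + y)) - ((x - padicFract p x) + (y - padicFract p y)) := by
      push_cast
      ring
    rw [hsplit]
    exact norm_sub_le_of_norm_le (norm_sub_padicFract_le_one _)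
      (norm_add_le_of_norm_le (norm_sub_padicFract_le_one _) (norm_sub_padicFract_le_one _))
  obtain ⟨k, hk⟩ := exists_eq_intCast_of_den_dvd_pow hden hnorm
  have hk' : (padicFract p (x + y) : ℂ) = padicFract p x + padicFract p y - k := by
    exact_mod_cast (show padicFract p (x + y) = padicFract p x + padicFract p y - k by linarith)
  rw [eChar, eChar, eChar, ← Complex.exp_add, Complex.exp_eq_exp_iff_exists_int]
  refine ⟨-k, ?_⟩
  rw [hk']
  push_cast
  ring

lemma eChar_eq_one_iff {x : ℚ_[p]} : eChar p x = 1 ↔ ‖x‖ ≤ 1 := by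
  rw [eChar, Complex.exp_eq_one_iff]
  constructor
  · rintro ⟨k, hk⟩
    have hfract : (padicFract p x : ℂ) = k :=
      mul_left_cancel₀ Complex.two_pi_I_ne_zero (hk.trans (mul_comm _ _))
    have hxk := norm_sub_padicFract_le_one x
    rw [show padicFract p x = k by exact_mod_cast hfract, Rat.cast_intCast] at hxk
    rw [← sub_add_cancel x (k : ℚ_[p])]
    exact norm_add_le_of_norm_le hxk (Padic.norm_int_le_one k)
  · intro hx
    have hfract : padicFract p x = 0 :=
      padicFract_eq_of_norm_sub_le_one (m := 0) (by simp) le_rfl one_pos (by simpa using hx)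
    exact ⟨0, by simp [hfract]⟩

lemma norm_eChar (x : ℚ_[p]) : ‖eChar p x‖ = 1 := by
  have hexp : 2 * (Real.pi : ℂ) * Complex.I * (padicFract p x : ℂ) =
      ((2 * Real.pi * (padicFract p x : ℝ) : ℝ) : ℂ) * Complex.I := by
    push_cast
    ring
  rw [eChar, hexp, Complex.norm_exp_ofReal_mul_I]

lemma eChar_neg (x : ℚ_[p]) : eChar p (-x) = (starRingEnd ℂ) (eChar p x) := by
  have hmul : eChar p x * eChar p (-x) = 1 := by
    rw [← eChar_add, add_neg_cancel, eChar_eq_one_iff.2 (by simp)]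
  rw [← Complex.inv_eq_conj (norm_eChar x), eq_inv_of_mul_eq_one_right hmul]

end Character

section Representatives

variable {n k : ℕ}

/-- The canonical representatives of `p^{-n}ℤ_p / p^{-k}ℤ_p`: the `x` with `|x|_p ≤ p^n` for which
`p^k x` is its own fractional part. The coordinates of `ξ` and `η` range over such sets. -/
def cosetReps (n k : ℕ) : Set ℚ_[p] :=
  {x | ‖x‖ ≤ (p : ℝ) ^ (n : ℤ) ∧
    (padicFract p (x * (p : ℚ_[p]) ^ k) : ℚ_[p]) = x * (p : ℚ_[p]) ^ k}

/-- The range of the central parameter `λ` up to level `n`. The trivial class of `ℚ_p/ℤ_p` is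
represented by `1` instead of `0`, so that `|λ|_p = p^{n_λ}` holds without exception. -/
def centralReps (n : ℕ) : Set ℚ_[p] :=
  {l | (l = 1 ∨ (1 < ‖l‖ ∧ (padicFract p l : ℚ_[p]) = l)) ∧ ‖l‖ ≤ (p : ℝ) ^ (n : ℤ)}

variable {p}

lemma cosetReps_eq_image (hkn : k ≤ n) :
    cosetReps p n k =
      (fun a : ℕ => (a : ℚ_[p]) / (p : ℚ_[p]) ^ n) '' (Finset.range (p ^ (n - k)) : Set ℕ) := by
  have hp : (p : ℚ_[p]) ≠ 0 := mod_cast (Fact.out : p.Prime).ne_zero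
  ext x
  have hdiv (a : ℕ) : (a : ℚ_[p]) / (p : ℚ_[p]) ^ (n - k) = x * (p : ℚ_[p]) ^ k ↔
      (a : ℚ_[p]) / (p : ℚ_[p]) ^ n = x := by
    rw [div_eq_iff (pow_ne_zero _ hp), mul_assoc, ← pow_add, Nat.add_sub_cancel' hkn,
      div_eq_iff (pow_ne_zero _ hp)]
  simp only [cosetReps, Set.mem_ofPred_eq, Set.mem_image, Finset.coe_range, Set.mem_Iio]
  rw [and_comm, ← norm_mul_pow_le_iff (m := k), ← Nat.cast_sub hkn,
    padicFract_eq_self_and_norm_le_iff]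
  simp only [hdiv]

lemma finite_cosetReps (hkn : k ≤ n) : (cosetReps p n k).Finite := by
  rw [cosetReps_eq_image hkn]
  exact (Finset.finite_toSet _).image _

lemma ncard_cosetReps (hkn : k ≤ n) : (cosetReps p n k).ncard = p ^ (n - k) := by
  have hp : (p : ℚ_[p]) ^ n ≠ 0 := pow_ne_zero _ (mod_cast (Fact.out : p.Prime).ne_zero)
  rw [cosetReps_eq_image hkn, Set.ncard_image_of_injective, Set.ncard_coe_finset,
    Finset.card_range]
  exact fun a b h => Nat.cast_injective ((div_left_inj' hp).1 h)

lemma eq_of_mem_cosetReps {x y : ℚ_[p]} (hx : x ∈ cosetReps p n k) (hy : y ∈ cosetReps p n k)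
    (h : ‖x - y‖ ≤ (p : ℝ) ^ (k : ℤ)) : x = y := by
  have hp : (p : ℚ_[p]) ^ k ≠ 0 := pow_ne_zero _ (mod_cast (Fact.out : p.Prime).ne_zero)
  refine mul_right_cancel₀ hp (eq_of_padicFract_eq_self hx.2 hy.2 ?_)
  rw [← sub_mul]
  exact norm_mul_pow_le_one_iff.2 h

lemma zero_mem_cosetReps : (0 : ℚ_[p]) ∈ cosetReps p n k := by
  have hfract : padicFract p (0 : ℚ_[p]) = 0 :=
    padicFract_eq_of_norm_sub_le_one (m := 0) (by simp) le_rfl one_pos (by simp)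
  exact ⟨by rw [norm_zero]; positivity, by simp [hfract]⟩

lemma one_le_norm_of_mem_centralReps {l : ℚ_[p]} (hl : l ∈ centralReps p n) : 1 ≤ ‖l‖ := by
  rcases hl.1 with rfl | h
  · simp
  · exact h.1.le

lemma centralReps_eq_insert : centralReps p n = insert 1 (cosetReps p n 0 \ {0}) := by
  ext l
  simp only [centralReps, cosetReps, pow_zero, mul_one, Set.mem_ofPred_eq, Set.mem_insert_iff,
    Set.mem_sdiff, Set.mem_singleton_iff]
  constructor
  · rintro ⟨rfl | ⟨hl, hfract⟩, hn⟩
    · exact Or.inl rfl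
    · exact Or.inr ⟨⟨hn, hfract⟩, norm_pos_iff.1 (one_pos.trans hl)⟩
  · rintro (rfl | ⟨⟨hn, hfract⟩, hl⟩)
    · exact ⟨Or.inl rfl, norm_one.trans_le
        (one_le_zpow₀ (mod_cast (Fact.out : p.Prime).one_le) n.cast_nonneg)⟩
    · refine ⟨Or.inr ⟨not_le.1 fun hle => hl ?_, hfract⟩, hn⟩
      exact eq_of_mem_cosetReps (n := n) (k := 0) ⟨hn, by simpa using hfract⟩ zero_mem_cosetReps
        (by simpa using hle)

lemma finite_centralReps : (centralReps p n).Finite := by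
  rw [centralReps_eq_insert]
  exact (finite_cosetReps n.zero_le).sdiff.insert _

lemma ncard_centralReps : (centralReps p n).ncard = p ^ n := by
  have hfin : (cosetReps p n 0).Finite := finite_cosetReps n.zero_le
  have hone : (1 : ℚ_[p]) ∉ cosetReps p n 0 \ {0} := fun h =>
    h.2 (eq_of_mem_cosetReps h.1 zero_mem_cosetReps (by simp))
  rw [centralReps_eq_insert, Set.ncard_insert_of_notMem hone hfin.sdiff,
    Set.ncard_sdiff_singleton_add_one zero_mem_cosetReps hfin, ncard_cosetReps n.zero_le,
    Nat.sub_zero]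

lemma norm_le_pow_nLam (l : ℚ_[p]) : ‖l‖ ≤ (p : ℝ) ^ (nLam p l : ℤ) :=
  norm_le_pow_toNat_neg_valuation l

lemma norm_eq_pow_nLam {l : ℚ_[p]} (hl : 1 ≤ ‖l‖) : ‖l‖ = (p : ℝ) ^ (nLam p l : ℤ) := by
  have hl₀ : l ≠ 0 := norm_pos_iff.1 (one_pos.trans_le hl)
  rw [Padic.norm_eq_zpow_neg_valuation hl₀] at hl ⊢
  have hv : 0 ≤ -l.valuation :=
    (one_le_zpow_iff_right₀ (mod_cast (Fact.out : p.Prime).one_lt)).1 hl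
  rw [nLam, Int.toNat_of_nonneg hv]

lemma nLam_le_of_norm_le {l : ℚ_[p]} (hl : ‖l‖ ≤ (p : ℝ) ^ (n : ℤ)) : nLam p l ≤ n := by
  rcases eq_or_ne l 0 with rfl | hl₀
  · simp [nLam]
  · rw [Padic.norm_eq_zpow_neg_valuation hl₀,
      zpow_le_zpow_iff_right₀ (mod_cast (Fact.out : p.Prime).one_lt)] at hl
    exact Int.toNat_le.2 hl

lemma eq_of_mem_centralReps {l l' : ℚ_[p]} (hl : l ∈ centralReps p n)
    (hl' : l' ∈ centralReps p n) (h : ‖l - l'‖ ≤ 1) : l = l' := by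
  have not_lt {a b : ℚ_[p]} (hab : ‖a - b‖ ≤ 1) (hb : b = 1) : ¬ 1 < ‖a‖ := by
    rw [not_lt, ← sub_add_cancel a b]
    exact norm_add_le_of_norm_le hab (by simp [hb])
  rcases hl.1 with h₁ | ⟨hlt, hfract⟩ <;> rcases hl'.1 with h₁' | ⟨hlt', hfract'⟩
  · rw [h₁, h₁']
  · exact absurd hlt' (not_lt (norm_sub_rev l l' ▸ h) h₁)
  · exact absurd hlt (not_lt h h₁')
  · exact eq_of_padicFract_eq_self hfract hfract' h

end Representatives

section IndexSet

variable {n : ℕ}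

/-- The index set of the family, regrouped as a bundle over the central parameter `λ`, with fibre
the tuples `(ξ, η, h, h')`. -/
def goodIdxEquiv (n : ℕ) : {t // GoodIdx p d n t} ≃
    Σ l : centralReps p n,
      (Fin d → cosetReps p n (nLam p l)) × (Fin d → cosetReps p n (nLam p l)) ×
        (Fin d → Fin (p ^ nLam p (l : ℚ_[p]))) × (Fin d → Fin (p ^ nLam p (l : ℚ_[p]))) where
  toFun t := ⟨⟨t.1.2.2.1, t.2.1, t.2.2.1⟩, fun i => ⟨t.1.1 i, t.2.2.2.1 i⟩,
    fun i => ⟨t.1.2.1 i, t.2.2.2.2.1 i⟩, fun i => ⟨t.1.2.2.2.1 i, t.2.2.2.2.2.1 i⟩,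
    fun i => ⟨t.1.2.2.2.2 i, t.2.2.2.2.2.2 i⟩⟩
  invFun s := ⟨(fun i => s.2.1 i, fun i => s.2.2.1 i, s.1, fun i => s.2.2.2.1 i,
    fun i => s.2.2.2.2 i), s.1.2.1, s.1.2.2, fun i => (s.2.1 i).2, fun i => (s.2.2.1 i).2,
    fun i => (s.2.2.2.1 i).2, fun i => (s.2.2.2.2 i).2⟩
  left_inv _ := rfl
  right_inv _ := rfl

variable {p d}

instance : Finite (centralReps p n) := finite_centralReps.to_subtype

instance (l : centralReps p n) : Finite (cosetReps p n (nLam p l)) :=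
  (finite_cosetReps (nLam_le_of_norm_le l.2.2)).to_subtype

instance : Finite {t // GoodIdx p d n t} := Finite.of_equiv _ (goodIdxEquiv p d n).symm

lemma card_goodIdx : Nat.card {t // GoodIdx p d n t} = p ^ (n * (2 * d + 1)) := by
  have := Fintype.ofFinite (centralReps p n)
  have hfibre (l : centralReps p n) :
      Nat.card ((Fin d → cosetReps p n (nLam p l)) × (Fin d → cosetReps p n (nLam p l)) ×
        (Fin d → Fin (p ^ nLam p (l : ℚ_[p]))) × (Fin d → Fin (p ^ nLam p (l : ℚ_[p])))) =
        p ^ (n * (2 * d)) := by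
    have hln := nLam_le_of_norm_le l.2.2
    simp only [Nat.card_prod, Nat.card_fun, Nat.card_fin, Nat.card_coe_set_eq, ncard_cosetReps hln,
      ← pow_mul, ← pow_add]
    congr 1
    calc _ = (n - nLam p l + nLam p l) * (2 * d) := by ring
      _ = n * (2 * d) := by rw [Nat.sub_add_cancel hln]
  rw [Nat.card_congr (goodIdxEquiv p d n), Nat.card_sigma, Finset.sum_congr rfl fun l _ => hfibre l,
    Finset.sum_const, Finset.card_univ, ← Nat.card_eq_fintype_card, Nat.card_coe_set_eq,
    ncard_centralReps, smul_eq_mul, ← pow_add]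
  congr 1
  ring

end IndexSet

section Pairing

variable {p d} {n : ℕ}

lemma norm_dotZ_le {x y : Fin d → ℤ_[p]} {c : ℝ} (hc : 0 ≤ c) (hy : ∀ i, ‖y i‖ ≤ c) :
    ‖dotZ p d x y‖ ≤ c := by
  refine IsUltrametricDist.norm_sum_le_of_forall_le_of_nonneg hc fun i _ => ?_
  rw [norm_mul]
  exact (mul_le_of_le_one_left (norm_nonneg _) (PadicInt.norm_le_one _)).trans (hy i)

lemma norm_mul_coe_le_one {x : ℚ_[p]} {y : ℤ_[p]} (hx : ‖x‖ ≤ (p : ℝ) ^ (n : ℤ))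
    (hy : ‖y‖ ≤ (p : ℝ) ^ (-(n : ℤ))) : ‖x * y‖ ≤ 1 := by
  have hp : (p : ℝ) ≠ 0 := mod_cast (Fact.out : p.Prime).ne_zero
  calc ‖x * y‖ = ‖x‖ * ‖y‖ := norm_mul _ _
    _ ≤ (p : ℝ) ^ (n : ℤ) * (p : ℝ) ^ (-(n : ℤ)) := by gcongr
    _ = 1 := by rw [← zpow_add₀ hp, add_neg_cancel, zpow_zero]

lemma norm_dotQZ_le_one {ξ : Fin d → ℚ_[p]} {x : Fin d → ℤ_[p]}
    (hξ : ∀ i, ‖ξ i‖ ≤ (p : ℝ) ^ (n : ℤ)) (hx : ∀ i, ‖x i‖ ≤ (p : ℝ) ^ (-(n : ℤ))) :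
    ‖dotQZ p d ξ x‖ ≤ 1 :=
  IsUltrametricDist.norm_sum_le_of_forall_le_of_nonneg zero_le_one fun i _ =>
    norm_mul_coe_le_one (hξ i) (hx i)

lemma dotQZ_zero (ξ : Fin d → ℚ_[p]) : dotQZ p d ξ 0 = 0 := by
  simp [dotQZ]

lemma dotQZ_single (ξ : Fin d → ℚ_[p]) (i : Fin d) (a : ℤ_[p]) :
    dotQZ p d ξ (Pi.single i a) = ξ i * a := by
  rw [dotQZ, Finset.sum_eq_single_of_mem i (Finset.mem_univ i) fun j _ hj => by simp [hj],
    Pi.single_eq_same]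

end Pairing

section Reduction

variable {p d} {n : ℕ}

lemma toZModPow_eq_iff {x y : ℤ_[p]} : PadicInt.toZModPow n x = PadicInt.toZModPow n y ↔
    ‖x - y‖ ≤ (p : ℝ) ^ (-(n : ℤ)) := by
  rw [PadicInt.norm_le_pow_iff_mem_span_pow, ← PadicInt.ker_toZModPow, RingHom.mem_ker, map_sub,
    sub_eq_zero]

lemma continuous_toZModPow (n : ℕ) :
    Continuous (PadicInt.toZModPow n : ℤ_[p] → ZMod (p ^ n)) := by
  have hp : (0 : ℝ) < (p : ℝ) ^ (-(n : ℤ)) := by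
    have := (Fact.out : p.Prime).pos
    positivity
  refine (IsLocallyConstant.iff_eventually_eq _).2 (fun x => ?_) |>.continuous
  filter_upwards [Metric.closedBall_mem_nhds x hp] with y hy
  exact toZModPow_eq_iff.2 (mem_closedBall_iff_norm.1 hy)

lemma Heis.continuous_coords : Continuous fun g : Heis p d => (g.x, g.y, g.z) :=
  continuous_induced_dom

lemma Heis.continuous_x : Continuous (Heis.x : Heis p d → Fin d → ℤ_[p]) :=
  Heis.continuous_coords.fst

lemma Heis.continuous_y : Continuous (Heis.y : Heis p d → Fin d → ℤ_[p]) :=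
  Heis.continuous_coords.snd.fst

lemma Heis.continuous_z : Continuous (Heis.z : Heis p d → ℤ_[p]) :=
  Heis.continuous_coords.snd.snd

instance : ContinuousMul (Heis p d) where
  continuous_mul := by
    refine continuous_induced_rng.2 ?_
    have hx := Heis.continuous_x (p := p) (d := d)
    have hy := Heis.continuous_y (p := p) (d := d)
    have hz := Heis.continuous_z (p := p) (d := d)
    simp only [Function.comp_def, heis_mul_def, dotZ]
    fun_prop

/-- Coordinatewise reduction modulo `p^n`. Its fibres are the left cosets of `H_d(p^n ℤ_p)`. -/
def Heis.reduction (n : ℕ) (g : Heis p d) :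
    (Fin d → ZMod (p ^ n)) × (Fin d → ZMod (p ^ n)) × ZMod (p ^ n) :=
  (fun i => PadicInt.toZModPow n (g.x i), fun i => PadicInt.toZModPow n (g.y i),
    PadicInt.toZModPow n g.z)

lemma Heis.continuous_reduction (n : ℕ) :
    Continuous (Heis.reduction n : Heis p d → _) := by
  have hmod := continuous_toZModPow (p := p) n
  refine (continuous_pi fun i => hmod.comp ?_).prodMk
    ((continuous_pi fun i => hmod.comp ?_).prodMk (hmod.comp Heis.continuous_z))
  · exact (continuous_apply i).comp Heis.continuous_x
  · exact (continuous_apply i).comp Heis.continuous_y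

lemma factorsThrough_reduction_of_mem_Dn {f : Heis p d → ℂ} (hf : f ∈ Dn p d n) :
    Function.FactorsThrough f (Heis.reduction n) := by
  intro g g' h
  simp only [Heis.reduction, Prod.mk.injEq, funext_iff, toZModPow_eq_iff] at h
  obtain ⟨hx, hy, hz⟩ := h
  let u : Heis p d := ⟨g.x - g'.x, g.y - g'.y, g.z - g'.z - dotZ p d g'.x (g.y - g'.y)⟩
  have hgu : g' * u = g := by
    simp only [heis_mul_def, u]
    ext1 <;> ring
  rw [← hf g' u ⟨hx, hy, norm_sub_le_of_norm_le hz (norm_dotZ_le (by positivity) hy)⟩, hgu]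

lemma exists_eq_comp_reduction_of_mem_Dn {f : Heis p d → ℂ} (hf : f ∈ Dn p d n) :
    ∃ F, f = F ∘ Heis.reduction n :=
  (Function.factorsThrough_iff f).1 (factorsThrough_reduction_of_mem_Dn hf)

lemma continuous_of_mem_Dn {f : Heis p d → ℂ} (hf : f ∈ Dn p d n) : Continuous f := by
  obtain ⟨F, rfl⟩ := exists_eq_comp_reduction_of_mem_Dn hf
  exact continuous_of_discreteTopology.comp (Heis.continuous_reduction n)

lemma integrable_of_mem_Dn {f : Heis p d → ℂ} (hf : f ∈ Dn p d n) (μ : Measure (Heis p d))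
    [IsFiniteMeasure μ] : Integrable f μ := by
  have hcont := continuous_of_mem_Dn hf
  obtain ⟨F, rfl⟩ := exists_eq_comp_reduction_of_mem_Dn hf
  obtain ⟨C, hC⟩ := (Set.finite_range F).isBounded.exists_norm_le
  exact Integrable.of_bound hcont.aestronglyMeasurable C
    (.of_forall fun g => hC _ (Set.mem_range_self _))

lemma mul_conj_mem_Dn {f f' : Heis p d → ℂ} (hf : f ∈ Dn p d n) (hf' : f' ∈ Dn p d n) :
    (fun g => f g * (starRingEnd ℂ) (f' g)) ∈ Dn p d n := fun g u hu => by
  simp only [hf g u hu, hf' g u hu]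

lemma Dn_le_range_funLeft :
    Dn p d n ≤ (LinearMap.funLeft ℂ ℂ (Heis.reduction n : Heis p d → _)).range := fun _ hf =>
  let ⟨F, hF⟩ := exists_eq_comp_reduction_of_mem_Dn hf
  ⟨F, hF.symm⟩

instance finiteDimensional_Dn : FiniteDimensional ℂ (Dn p d n) :=
  Submodule.finiteDimensional_of_le Dn_le_range_funLeft

lemma finrank_Dn_le : Module.finrank ℂ (Dn p d n) ≤ p ^ (n * (2 * d + 1)) :=
  calc Module.finrank ℂ (Dn p d n)
      ≤ Module.finrank ℂ (LinearMap.funLeft ℂ ℂ (Heis.reduction n : Heis p d → _)).range :=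
        Submodule.finrank_mono Dn_le_range_funLeft
    _ ≤ Module.finrank ℂ ((Fin d → ZMod (p ^ n)) × (Fin d → ZMod (p ^ n)) × ZMod (p ^ n) → ℂ) :=
        LinearMap.finrank_range_le _
    _ = p ^ (n * (2 * d + 1)) := by
        rw [Module.finrank_fintype_fun_eq_card]
        simp only [Fintype.card_prod, Fintype.card_fun, Fintype.card_fin, ZMod.card, ← pow_mul,
          ← pow_add]
        congr 1
        ring

end Reduction

section Indicator

variable {p d} {k : ℕ}

lemma natCast_eq_of_norm_sub_le {a b : ℕ} (ha : a < p ^ k) (hb : b < p ^ k)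
    (h : ‖(a : ℤ_[p]) - b‖ ≤ (p : ℝ) ^ (-(k : ℤ))) : a = b := by
  rw [← toZModPow_eq_iff, map_natCast, map_natCast, ZMod.natCast_eq_natCast_iff] at h
  exact h.eq_of_lt_of_lt ha hb

lemma indC_apply (k : ℕ) (h u : Fin d → ℤ_[p]) :
    indC p d k h u = if ∀ i, ‖u i - h i‖ ≤ (p : ℝ) ^ (-(k : ℤ)) then 1 else 0 :=
  Set.indicator_apply _ _ _

lemma indC_add_left (h u v : Fin d → ℤ_[p]) :
    indC p d k h (v + u) = indC p d k (h - v) u := by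
  simp only [indC_apply, Pi.add_apply, Pi.sub_apply, sub_sub_eq_add_sub, add_comm]

lemma indC_add_left_of_norm_le {v : Fin d → ℤ_[p]} (hv : ∀ i, ‖v i‖ ≤ (p : ℝ) ^ (-(k : ℤ)))
    (h u : Fin d → ℤ_[p]) : indC p d k h (v + u) = indC p d k h u := by
  have hiff (i : Fin d) : ‖(v + u) i - h i‖ ≤ (p : ℝ) ^ (-(k : ℤ)) ↔
      ‖u i - h i‖ ≤ (p : ℝ) ^ (-(k : ℤ)) := by
    rw [Pi.add_apply, add_sub_assoc]
    refine ⟨fun hi => ?_, norm_add_le_of_norm_le (hv i)⟩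
    rw [← add_sub_cancel_left (v i) (u i - h i)]
    exact norm_sub_le_of_norm_le hi (hv i)
  simp only [indC_apply, hiff]

lemma indC_mul_self (h u : Fin d → ℤ_[p]) :
    indC p d k h u * indC p d k h u = indC p d k h u := by
  simp only [indC_apply, mul_ite, mul_one, mul_zero, ← ite_and, and_self]

lemma conj_indC (h u : Fin d → ℤ_[p]) :
    (starRingEnd ℂ) (indC p d k h u) = indC p d k h u := by
  rw [indC_apply, apply_ite (starRingEnd ℂ), map_one, map_zero]

lemma norm_sub_le_of_indC_mul_indC_ne_zero {h h' u : Fin d → ℤ_[p]}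
    (hne : indC p d k h u * indC p d k h' u ≠ 0) (i : Fin d) :
    ‖h i - h' i‖ ≤ (p : ℝ) ^ (-(k : ℤ)) := by
  simp only [indC_apply, ne_eq, mul_eq_zero, ite_eq_right_iff, one_ne_zero, imp_false, not_or,
    not_not] at hne
  rw [← sub_sub_sub_cancel_left _ _ (u i)]
  exact norm_sub_le_of_norm_le (hne.2 i) (hne.1 i)

lemma sum_indC (k : ℕ) (u : Fin d → ℤ_[p]) :
    ∑ r : Fin d → ZMod (p ^ k), indC p d k (fun i => ((r i).val : ℤ_[p])) u = 1 := by
  have hiff (r : Fin d → ZMod (p ^ k)) :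
      (∀ i, ‖u i - ((r i).val : ℤ_[p])‖ ≤ (p : ℝ) ^ (-(k : ℤ))) ↔
        (fun i => PadicInt.toZModPow k (u i)) = r := by
    simp only [← toZModPow_eq_iff, map_natCast, ZMod.natCast_zmod_val, funext_iff]
  simp only [indC_apply, hiff, Finset.sum_ite_eq, Finset.mem_univ, if_true]

lemma indC_x_mem_Dn (k : ℕ) (h : Fin d → ℤ_[p]) :
    (fun g : Heis p d => indC p d k h g.x) ∈ Dn p d k := fun g u hu => by
  simp only [heis_mul_def]
  rw [add_comm, indC_add_left_of_norm_le hu.1]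

end Indicator

section Phase

variable {p d} {n : ℕ} {ξ η : Fin d → ℚ_[p]} {l : ℚ_[p]} {h h' : Fin d → ℤ_[p]}

/-- The phase `ξ·x + η·y + λ(z + h'·y)` in the exponent of the matrix coefficient. -/
def phase (ξ η : Fin d → ℚ_[p]) (l : ℚ_[p]) (h' : Fin d → ℤ_[p]) (g : Heis p d) : ℚ_[p] :=
  dotQZ p d ξ g.x + dotQZ p d η g.y + l * ((g.z : ℚ_[p]) + (dotZ p d h' g.y : ℚ_[p]))

lemma matCoeff_eq_eChar_phase_mul_indC (g : Heis p d) : matCoeff p d ξ η l h h' g =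
    eChar p (phase ξ η l h' g) * indC p d (nLam p l) (h - h') g.x := rfl

lemma phase_mul (u g : Heis p d) : phase ξ η l h' (u * g) =
    phase ξ η l h' u + phase ξ η l h' g + l * (dotZ p d u.x g.y : ℚ_[p]) := by
  simp only [phase, heis_mul_def, dotQZ, dotZ, Pi.add_apply, PadicInt.coe_add, mul_add,
    Finset.sum_add_distrib]
  ring

/- On `{u | u.x ∈ p^{n_λ} ℤ_p^d}` the cocycle `λ(u.x · g.y)` is integral, so translation by such
`u` acts on a matrix coefficient through a character. -/
lemma matCoeff_mul_left {u : Heis p d} (hu : ∀ i, ‖u.x i‖ ≤ (p : ℝ) ^ (-(nLam p l : ℤ)))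
    (g : Heis p d) : matCoeff p d ξ η l h h' (u * g) =
      eChar p (phase ξ η l h' u) * matCoeff p d ξ η l h h' g := by
  have hcocycle : ‖l * (dotZ p d u.x g.y : ℚ_[p])‖ ≤ 1 := by
    refine norm_mul_coe_le_one (norm_le_pow_nLam l) ?_
    rw [show dotZ p d u.x g.y = dotZ p d g.y u.x from dotProduct_comm _ _]
    exact norm_dotZ_le (by positivity) hu
  rw [matCoeff_eq_eChar_phase_mul_indC, matCoeff_eq_eChar_phase_mul_indC, phase_mul, eChar_add,
    eChar_add, eChar_eq_one_iff.2 hcocycle, mul_one, mul_assoc]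
  exact congrArg _ (congrArg _ (indC_add_left_of_norm_le hu _ _))

lemma matCoeff_mem_Dn (hξ : ∀ i, ‖ξ i‖ ≤ (p : ℝ) ^ (n : ℤ)) (hη : ∀ i, ‖η i‖ ≤ (p : ℝ) ^ (n : ℤ))
    (hl : ‖l‖ ≤ (p : ℝ) ^ (n : ℤ)) : matCoeff p d ξ η l h h' ∈ Dn p d n := by
  rintro g u ⟨hx, hy, hz⟩
  have hdot (v : Fin d → ℤ_[p]) : ‖dotZ p d v u.y‖ ≤ (p : ℝ) ^ (-(n : ℤ)) :=
    norm_dotZ_le (by positivity) hy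
  have hphase : ‖phase ξ η l h' u‖ ≤ 1 := by
    refine norm_add_le_of_norm_le
      (norm_add_le_of_norm_le (norm_dotQZ_le_one hξ hx) (norm_dotQZ_le_one hη hy)) ?_
    rw [← PadicInt.coe_add]
    exact norm_mul_coe_le_one hl (norm_add_le_of_norm_le hz (hdot h'))
  have hx' (i : Fin d) : ‖u.x i‖ ≤ (p : ℝ) ^ (-(nLam p l : ℤ)) :=
    (hx i).trans (zpow_le_zpow_right₀ (mod_cast (Fact.out : p.Prime).one_le)
      (by simpa using nLam_le_of_norm_le hl))
  have hx_mul : (g * u).x = u.x + g.x := add_comm _ _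
  rw [matCoeff_eq_eChar_phase_mul_indC, matCoeff_eq_eChar_phase_mul_indC, phase_mul, eChar_add,
    eChar_add, eChar_eq_one_iff.2 hphase, eChar_eq_one_iff.2 (norm_mul_coe_le_one hl (hdot g.x)),
    mul_one, mul_one, hx_mul, indC_add_left_of_norm_le hx']

lemma matCoeffN_mem_Dn {h h' : Fin d → ℕ} (hξ : ∀ i, ‖ξ i‖ ≤ (p : ℝ) ^ (n : ℤ))
    (hη : ∀ i, ‖η i‖ ≤ (p : ℝ) ^ (n : ℤ)) (hl : ‖l‖ ≤ (p : ℝ) ^ (n : ℤ)) :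
    matCoeffN p d ξ η l h h' ∈ Dn p d n :=
  (Dn p d n).smul_mem _ (matCoeff_mem_Dn hξ hη hl)

end Phase

section Integral

lemma integral_eq_zero_of_mul_left_eq_smul {G 𝕜 E : Type*} [Group G] [MeasurableSpace G]
    [MeasurableMul G] [NormedField 𝕜] [NormedAddCommGroup E] [NormedSpace ℝ E] [NormedSpace 𝕜 E]
    [SMulCommClass ℝ 𝕜 E] {μ : Measure G} [μ.IsMulLeftInvariant] {f : G → E} {u : G} {c : 𝕜}
    (hc : c ≠ 1) (hf : ∀ g, f (u * g) = c • f g) : ∫ g, f g ∂μ = 0 := by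
  have hsmul : (c - 1) • ∫ g, f g ∂μ = 0 := by
    have htranslate := integral_mul_left_eq_self (μ := μ) f u
    rw [funext hf, integral_smul] at htranslate
    rw [sub_smul, one_smul, htranslate, sub_self]
  exact (smul_eq_zero.1 hsmul).resolve_left (sub_ne_zero.2 hc)

lemma linearIndependent_of_integral_mul_conj {ι α 𝕜 : Type*} [RCLike 𝕜] [MeasurableSpace α]
    {μ : Measure α} {φ : ι → α → 𝕜}
    (hint : ∀ i j, Integrable (fun x => φ i x * (starRingEnd 𝕜) (φ j x)) μ)
    (horth : ∀ i j, i ≠ j → ∫ x, φ i x * (starRingEnd 𝕜) (φ j x) ∂μ = 0)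
    (hself : ∀ i, ∫ x, φ i x * (starRingEnd 𝕜) (φ i x) ∂μ ≠ 0) : LinearIndependent 𝕜 φ := by
  refine linearIndependent_iff'.2 fun s c hc j hj => ?_
  have hpoint (x : α) : ∑ i ∈ s, c i * (φ i x * (starRingEnd 𝕜) (φ j x)) = 0 := by
    have hx : ∑ i ∈ s, c i * φ i x = 0 := by simpa using congrFun hc x
    simp only [← mul_assoc, ← Finset.sum_mul, hx, zero_mul]
  have hsum : ∑ i ∈ s, c i * ∫ x, φ i x * (starRingEnd 𝕜) (φ j x) ∂μ = 0 := by
    simp only [← integral_const_mul]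
    rw [← integral_finsetSum s fun i _ => (hint i j).const_mul (c i)]
    simp only [hpoint, integral_zero]
  rw [Finset.sum_eq_single_of_mem j hj fun i _ hij => by rw [horth i j hij, mul_zero]] at hsum
  exact (mul_eq_zero.1 hsum).resolve_right (hself j)

end Integral

section Disjointness

variable {p d} {n : ℕ} {ξ η ξ' η' : Fin d → ℚ_[p]} {l l' : ℚ_[p]}

lemma integral_matCoeffN_mul_conj (μ : Measure (Heis p d)) (ξ η ξ' η' : Fin d → ℚ_[p])
    (l l' : ℚ_[p]) (h h' k k' : Fin d → ℕ) :
    ∫ g, matCoeffN p d ξ η l h h' g * (starRingEnd ℂ) (matCoeffN p d ξ' η' l' k k' g) ∂μ =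
      (Real.sqrt ((p : ℝ) ^ (nLam p l * d)) * Real.sqrt ((p : ℝ) ^ (nLam p l' * d))) *
        ∫ g, matCoeff p d ξ η l (fun i => h i) (fun i => h' i) g *
          (starRingEnd ℂ) (matCoeff p d ξ' η' l' (fun i => k i) (fun i => k' i) g) ∂μ := by
  simp only [matCoeffN, map_mul, Complex.conj_ofReal, mul_mul_mul_comm, integral_const_mul]

lemma norm_sub_sub_sub_le_of_integral_matCoeff_ne_zero {μ : Measure (Heis p d)}
    {h h' k k' : Fin d → ℤ_[p]}
    (hne : ∫ g, matCoeff p d ξ η l h h' g *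
      (starRingEnd ℂ) (matCoeff p d ξ' η' l k k' g) ∂μ ≠ 0) (i : Fin d) :
    ‖(h - h') i - (k - k') i‖ ≤ (p : ℝ) ^ (-(nLam p l : ℤ)) := by
  obtain ⟨g, hg⟩ : ∃ g, matCoeff p d ξ η l h h' g *
      (starRingEnd ℂ) (matCoeff p d ξ' η' l k k' g) ≠ 0 := by
    by_contra! hzero
    exact hne (by simp only [hzero, integral_zero])
  rw [matCoeff_eq_eChar_phase_mul_indC, matCoeff_eq_eChar_phase_mul_indC, map_mul, conj_indC,
    mul_mul_mul_comm] at hg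
  exact norm_sub_le_of_indC_mul_indC_ne_zero (right_ne_zero_of_mul hg) i

lemma eq_and_eq_of_norm_add_mul_sub_le_one {x y : ℚ_[p]} {a b : ℕ} (hl : 1 ≤ ‖l‖)
    (hx : x ∈ cosetReps p n (nLam p l)) (hy : y ∈ cosetReps p n (nLam p l))
    (ha : a < p ^ nLam p l) (hb : b < p ^ nLam p l)
    (h : ‖(x + l * (a : ℤ_[p])) - (y + l * (b : ℤ_[p]))‖ ≤ 1) : x = y ∧ a = b := by
  have hp : (0 : ℝ) < p := mod_cast (Fact.out : p.Prime).pos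
  have hmul (c : ℤ_[p]) : ‖l * c‖ = (p : ℝ) ^ (nLam p l : ℤ) * ‖c‖ := by
    rw [norm_mul, norm_eq_pow_nLam hl, PadicInt.norm_def]
  have hsplit : (x + l * (a : ℤ_[p])) - (y + l * (b : ℤ_[p])) =
      (x - y) + l * ((a - b : ℤ_[p]) : ℚ_[p]) := by
    push_cast
    ring
  rw [hsplit] at h
  have hxy : x = y := by
    refine eq_of_mem_cosetReps hx hy ?_
    rw [← add_sub_cancel_right (x - y) (l * ((a - b : ℤ_[p]) : ℚ_[p]))]
    refine norm_sub_le_of_norm_le (h.trans (norm_eq_pow_nLam hl ▸ hl)) ?_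
    rw [hmul]
    exact mul_le_of_le_one_right (by positivity) (PadicInt.norm_le_one _)
  refine ⟨hxy, natCast_eq_of_norm_sub_le ha hb ?_⟩
  rw [hxy, sub_self, zero_add, hmul] at h
  rwa [zpow_neg, ← one_div, le_div_iff₀' (by positivity)]

end Disjointness

section Orthogonality

variable {p d} {n : ℕ} {μ : Measure (Heis p d)} [μ.IsMulLeftInvariant]
  {ξ η ξ' η' : Fin d → ℚ_[p]} {l l' : ℚ_[p]}

lemma integral_indC_x [IsProbabilityMeasure μ] (k : ℕ) (h : Fin d → ℤ_[p]) :
    (p : ℂ) ^ (k * d) * ∫ g : Heis p d, indC p d k h g.x ∂μ = 1 := by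
  have htranslate (r : Fin d → ℤ_[p]) :
      ∫ g : Heis p d, indC p d k r g.x ∂μ = ∫ g : Heis p d, indC p d k h g.x ∂μ := by
    rw [← integral_mul_left_eq_self _ (⟨r - h, 0, 0⟩ : Heis p d)]
    simp only [heis_mul_def, indC_add_left, sub_sub_cancel]
  calc (p : ℂ) ^ (k * d) * ∫ g : Heis p d, indC p d k h g.x ∂μ
      = ∑ r : Fin d → ZMod (p ^ k),
          ∫ g : Heis p d, indC p d k (fun i => ((r i).val : ℤ_[p])) g.x ∂μ := by
        simp [htranslate, pow_mul]
    _ = ∫ _ : Heis p d, 1 ∂μ := by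
        rw [← integral_finsetSum _ fun r _ => integrable_of_mem_Dn (indC_x_mem_Dn k _) μ]
        simp only [sum_indC]
    _ = 1 := by simp

lemma integral_matCoeffN_mul_conj_self [IsProbabilityMeasure μ] (ξ η : Fin d → ℚ_[p]) (l : ℚ_[p])
    (h h' : Fin d → ℕ) :
    ∫ g, matCoeffN p d ξ η l h h' g * (starRingEnd ℂ) (matCoeffN p d ξ η l h h' g) ∂μ = 1 := by
  rw [← integral_indC_x (μ := μ) (nLam p l) (fun i => (h i : ℤ_[p]) - h' i), ← integral_const_mul]
  congr 1 with g
  have hsqrt : (Real.sqrt ((p : ℝ) ^ (nLam p l * d)) : ℂ) *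
      (Real.sqrt ((p : ℝ) ^ (nLam p l * d)) : ℂ) = (p : ℂ) ^ (nLam p l * d) := by
    rw [← Complex.ofReal_mul, Real.mul_self_sqrt (by positivity), Complex.ofReal_pow,
      Complex.ofReal_natCast]
  have heChar (x : ℚ_[p]) : eChar p x * (starRingEnd ℂ) (eChar p x) = 1 := by
    rw [← eChar_neg, ← eChar_add, add_neg_cancel, eChar_eq_one_iff.2 (by simp)]
  simp only [matCoeffN, matCoeff_eq_eChar_phase_mul_indC, map_mul, conj_indC, Complex.conj_ofReal]
  rw [mul_mul_mul_comm, mul_mul_mul_comm (eChar p _), hsqrt, heChar, indC_mul_self, one_mul]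
  rfl

variable {h h' k k' : Fin d → ℤ_[p]}

lemma norm_phase_sub_le_one_of_integral_matCoeff_ne_zero {u : Heis p d}
    (hu : ∀ i, ‖u.x i‖ ≤ (p : ℝ) ^ (-(nLam p l : ℤ)))
    (hu' : ∀ i, ‖u.x i‖ ≤ (p : ℝ) ^ (-(nLam p l' : ℤ)))
    (hne : ∫ g, matCoeff p d ξ η l h h' g *
      (starRingEnd ℂ) (matCoeff p d ξ' η' l' k k' g) ∂μ ≠ 0) :
    ‖phase ξ η l h' u - phase ξ' η' l' k' u‖ ≤ 1 := by
  by_contra hgt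
  refine hne (integral_eq_zero_of_mul_left_eq_smul (u := u) (mt eChar_eq_one_iff.1 hgt) fun g => ?_)
  rw [matCoeff_mul_left hu, matCoeff_mul_left hu', sub_eq_add_neg, eChar_add, eChar_neg, map_mul,
    mul_mul_mul_comm, smul_eq_mul]

lemma norm_lam_sub_le_one_of_integral_matCoeff_ne_zero
    (hne : ∫ g, matCoeff p d ξ η l h h' g *
      (starRingEnd ℂ) (matCoeff p d ξ' η' l' k k' g) ∂μ ≠ 0) : ‖l - l'‖ ≤ 1 := by
  have h := norm_phase_sub_le_one_of_integral_matCoeff_ne_zero (u := ⟨0, 0, 1⟩)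
    (fun i => by simp) (fun i => by simp) hne
  simpa [phase, dotQZ_zero, dotZ] using h

lemma norm_xi_sub_le_of_integral_matCoeff_ne_zero
    (hne : ∫ g, matCoeff p d ξ η l h h' g *
      (starRingEnd ℂ) (matCoeff p d ξ' η' l k k' g) ∂μ ≠ 0) (i : Fin d) :
    ‖ξ i - ξ' i‖ ≤ (p : ℝ) ^ (nLam p l : ℤ) := by
  have hsmall (j : Fin d) : ‖(Pi.single i ((p : ℤ_[p]) ^ nLam p l) : Fin d → ℤ_[p]) j‖ ≤
      (p : ℝ) ^ (-(nLam p l : ℤ)) := by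
    rcases eq_or_ne j i with rfl | hj
    · rw [Pi.single_eq_same, PadicInt.norm_p_pow]
    · rw [Pi.single_eq_of_ne hj, norm_zero]
      positivity
  rw [← norm_mul_pow_le_one_iff, sub_mul]
  simpa [phase, dotQZ_single, dotQZ_zero, dotZ] using
    norm_phase_sub_le_one_of_integral_matCoeff_ne_zero
      (u := ⟨Pi.single i ((p : ℤ_[p]) ^ nLam p l), 0, 0⟩) hsmall hsmall hne

lemma norm_eta_add_mul_sub_le_one_of_integral_matCoeff_ne_zero
    (hne : ∫ g, matCoeff p d ξ η l h h' g *
      (starRingEnd ℂ) (matCoeff p d ξ' η' l' k k' g) ∂μ ≠ 0) (i : Fin d) :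
    ‖(η i + l * h' i) - (η' i + l' * k' i)‖ ≤ 1 := by
  simpa [phase, dotQZ_single, dotQZ_zero, dotZ, Pi.single_apply] using
    norm_phase_sub_le_one_of_integral_matCoeff_ne_zero (u := ⟨0, Pi.single i 1, 0⟩)
      (fun j => by simp) (fun j => by simp) hne

lemma goodIdx_eq_of_integral_matCoeffN_ne_zero
    {t t' : (Fin d → ℚ_[p]) × (Fin d → ℚ_[p]) × ℚ_[p] × (Fin d → ℕ) × (Fin d → ℕ)}
    (ht : GoodIdx p d n t) (ht' : GoodIdx p d n t')
    (hne : ∫ g, matCoeffN p d t.1 t.2.1 t.2.2.1 t.2.2.2.1 t.2.2.2.2 g * (starRingEnd ℂ)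
      (matCoeffN p d t'.1 t'.2.1 t'.2.2.1 t'.2.2.2.1 t'.2.2.2.2 g) ∂μ ≠ 0) : t = t' := by
  obtain ⟨ξ, η, l, h, h'⟩ := t
  obtain ⟨ξ', η', l', k, k'⟩ := t'
  obtain ⟨hl₁, hl₂, hξ, hη, hh, hh'⟩ := ht
  obtain ⟨hl₁', hl₂', hξ', hη', hk, hk'⟩ := ht'
  dsimp only at *
  rw [integral_matCoeffN_mul_conj] at hne
  replace hne := right_ne_zero_of_mul hne
  have hl : l ∈ centralReps p n := ⟨hl₁, hl₂⟩
  obtain rfl : l = l' :=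
    eq_of_mem_centralReps hl ⟨hl₁', hl₂'⟩ (norm_lam_sub_le_one_of_integral_matCoeff_ne_zero hne)
  have hηh' (i : Fin d) : η i = η' i ∧ h' i = k' i :=
    eq_and_eq_of_norm_add_mul_sub_le_one (one_le_norm_of_mem_centralReps hl) (hη i) (hη' i)
      (hh' i) (hk' i) (norm_eta_add_mul_sub_le_one_of_integral_matCoeff_ne_zero hne i)
  obtain rfl : η = η' := funext fun i => (hηh' i).1
  obtain rfl : h' = k' := funext fun i => (hηh' i).2
  obtain rfl : h = k := funext fun i => natCast_eq_of_norm_sub_le (hh i) (hk i) <| by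
    simpa using norm_sub_sub_sub_le_of_integral_matCoeff_ne_zero hne i
  obtain rfl : ξ = ξ' := funext fun i =>
    eq_of_mem_cosetReps (hξ i) (hξ' i) (norm_xi_sub_le_of_integral_matCoeff_ne_zero hne i)
  rfl

lemma integral_matCoeffN_mul_conj_eq_ite [IsProbabilityMeasure μ]
    {t t' : (Fin d → ℚ_[p]) × (Fin d → ℚ_[p]) × ℚ_[p] × (Fin d → ℕ) × (Fin d → ℕ)}
    (ht : GoodIdx p d n t) (ht' : GoodIdx p d n t') :
    ∫ g, matCoeffN p d t.1 t.2.1 t.2.2.1 t.2.2.2.1 t.2.2.2.2 g * (starRingEnd ℂ)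
      (matCoeffN p d t'.1 t'.2.1 t'.2.2.1 t'.2.2.2.1 t'.2.2.2.2 g) ∂μ =
        if t = t' then 1 else 0 := by
  split_ifs with heq
  · rw [heq, integral_matCoeffN_mul_conj_self]
  · exact not_not.1 (mt (goodIdx_eq_of_integral_matCoeffN_ne_zero ht ht') heq)

end Orthogonality

/-- The normalized matrix coefficients `|λ|_p^{d/2}(π_{(ξ,η,λ)})_{hh'}`,
indexed by `GoodIdx n`, form an orthonormal family in `L²(H_d)` of cardinality
`p^{n(2d+1)}`, hence an orthonormal basis of `D_n(H_d)`. -/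
theorem matCoeff_orthonormal_basis (n : ℕ)
    (μH : MeasureTheory.Measure (Heis p d))
    (hinvH : ∀ g₀ : Heis p d, μH.map (g₀ * ·) = μH) (hprobH : μH Set.univ = 1) :
    (∀ t t', GoodIdx p d n t → GoodIdx p d n t' →
      ∫ g, matCoeffN p d t.1 t.2.1 t.2.2.1 t.2.2.2.1 t.2.2.2.2 g *
          (starRingEnd ℂ) (matCoeffN p d t'.1 t'.2.1 t'.2.2.1 t'.2.2.2.1 t'.2.2.2.2 g) ∂μH =
        if t = t' then 1 else 0) ∧
    Nat.card {t // GoodIdx p d n t} = p ^ (n * (2 * d + 1)) ∧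
    Submodule.span ℂ {f : Heis p d → ℂ | ∃ t, GoodIdx p d n t ∧
        f = matCoeffN p d t.1 t.2.1 t.2.2.1 t.2.2.2.1 t.2.2.2.2} = Dn p d n := by
  have : IsProbabilityMeasure μH := ⟨hprobH⟩
  have : μH.IsMulLeftInvariant := ⟨hinvH⟩
  refine ⟨fun t t' ht ht' => integral_matCoeffN_mul_conj_eq_ite ht ht', card_goodIdx, ?_⟩
  let φ (t : {t // GoodIdx p d n t}) : Heis p d → ℂ :=
    matCoeffN p d t.1.1 t.1.2.1 t.1.2.2.1 t.1.2.2.2.1 t.1.2.2.2.2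
  have hmem (t : {t // GoodIdx p d n t}) : φ t ∈ Dn p d n :=
    matCoeffN_mem_Dn (fun i => (t.2.2.2.1 i).1) (fun i => (t.2.2.2.2.1 i).1) t.2.2.1
  have horth (t t' : {t // GoodIdx p d n t}) :
      ∫ g, φ t g * (starRingEnd ℂ) (φ t' g) ∂μH = if t.1 = t'.1 then 1 else 0 :=
    integral_matCoeffN_mul_conj_eq_ite t.2 t'.2
  have hlin : LinearIndependent ℂ φ := linearIndependent_of_integral_mul_conj (μ := μH)
    (fun t t' => integrable_of_mem_Dn (mul_conj_mem_Dn (hmem t) (hmem t')) μH)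
    (fun t t' hne => by rw [horth, if_neg (Subtype.coe_ne_coe.2 hne)])
    (fun t => by rw [horth, if_pos rfl]; exact one_ne_zero)
  have hrange : {f | ∃ t, GoodIdx p d n t ∧
      f = matCoeffN p d t.1 t.2.1 t.2.2.1 t.2.2.2.1 t.2.2.2.2} = Set.range φ :=
    Set.ext fun f => by simp only [φ, Set.mem_ofPred_eq, Set.mem_range, Subtype.exists,
      exists_prop, eq_comm]
  have := Fintype.ofFinite {t // GoodIdx p d n t}
  rw [hrange]
  refine Submodule.eq_of_le_of_finrank_le (Submodule.span_le.2 (Set.range_subset_iff.2 hmem)) ?_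
  rw [finrank_span_eq_card hlin, ← Nat.card_eq_fintype_card, card_goodIdx]
  exact finrank_Dn_le
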